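/- arXiv:1909.06648 — 2 statements merged into one kernel-verified Lean document; each statement's English description precedes it below -/
import Mathlib

section
/- Let m ∈ [0,1/3]. For every (a,b) ∈ Δ_m, Gini's gamma satisfies: γ(C̲^{(a,b)}_m) ≥ 4m² − 1 if 0 ≤ m ≤ 1/4 and γ(C̲^{(a,b)}_m) ≥ 20m² − 8m if 1/4 ≤ m ≤ 1/3, with equality at (a,b) = (m, 1−m); and γ(C̄^{(a,b)}_m) ≤ h(m), with equality at (a,b) = (m, 2m), where h(m) = 1 − 8m² if 0 ≤ m ≤ 1/6, h(m) = 12m − 44m² if 1/6 ≤ m ≤ 1/5, h(m) = 1 + 2m − 19m² if 1/5 ≤ m ≤ 1/4, and h(m) = 2 − 6m − 3m² if 1/4 ≤ m ≤ 1/3. -/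
open Set MeasureTheory intervalIntegral

/-- A bivariate copula: boundary conditions plus the 2-increasing property. -/
def IsCopula (C : ℝ → ℝ → ℝ) : Prop :=
  (∀ u ∈ Set.Icc (0:ℝ) 1, C u 0 = 0 ∧ C 0 u = 0 ∧ C u 1 = u ∧ C 1 u = u) ∧
  ∀ u₁ u₂ v₁ v₂ : ℝ, 0 ≤ u₁ → u₁ ≤ u₂ → u₂ ≤ 1 → 0 ≤ v₁ → v₁ ≤ v₂ → v₂ ≤ 1 →
    0 ≤ C u₂ v₂ - C u₂ v₁ - C u₁ v₂ + C u₁ v₁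

/-- The lower bound function C̲^{(a,b)}_c. -/
noncomputable def lowerC (a b c : ℝ) : ℝ → ℝ → ℝ := fun u v =>
  max (max (u + v - 1) 0)
    (min (min (max (a + b - 1) 0 + c) (u - a + (max (a + b - 1) 0 + c)))
      (min (v - b + (max (a + b - 1) 0 + c)) (u + v - a - b + (max (a + b - 1) 0 + c))))

/-- The upper bound function C̄^{(a,b)}_c. -/
noncomputable def upperC (a b c : ℝ) : ℝ → ℝ → ℝ := fun u v =>
  min (min u v)
    (max (max (min a b - c) (u - b + (min a b - c)))
      (max (v - a + (min a b - c)) (u + v - a - b + (min a b - c))))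

/-- Spearman's rho of a copula. -/
noncomputable def spearmanRho (C : ℝ → ℝ → ℝ) : ℝ :=
  12 * (∫ u in (0:ℝ)..1, ∫ v in (0:ℝ)..1, C u v) - 3

/-- Spearman's footrule of a copula. -/
noncomputable def spearmanFootrule (C : ℝ → ℝ → ℝ) : ℝ :=
  6 * (∫ u in (0:ℝ)..1, C u u) - 2

/-- Gini's gamma of a copula. -/
noncomputable def giniGamma (C : ℝ → ℝ → ℝ) : ℝ :=
  4 * (∫ u in (0:ℝ)..1, (C u u + C u (1 - u))) - 2

/-- Blomqvist's beta of a copula. -/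
noncomputable def blomqvistBeta (C : ℝ → ℝ → ℝ) : ℝ :=
  4 * C (1/2) (1/2) - 1

lemma integral_of_eqOn_affine {f : ℝ → ℝ} {p q : ℝ} (α β : ℝ) (hpq : p ≤ q)
    (h : ∀ u, p ≤ u → u ≤ q → f u = α * u + β) :
    ∫ u in p..q, f u = α * ((q ^ 2 - p ^ 2) / 2) + β * (q - p) := by
  have hcongr : ∫ u in p..q, f u = ∫ u in p..q, (α * u + β) := by
    refine intervalIntegral.integral_congr fun u hu => ?_
    rw [uIcc_of_le hpq] at hu
    exact h u hu.1 hu.2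
  rw [hcongr, intervalIntegral.integral_add (Continuous.intervalIntegrable (by fun_prop) _ _)
    (Continuous.intervalIntegrable (by fun_prop) _ _), intervalIntegral.integral_const_mul,
    integral_id, intervalIntegral.integral_const, smul_eq_mul]
  ring

lemma integral_split {f : ℝ → ℝ} (hf : Continuous f) (p q r : ℝ) :
    ∫ u in p..r, f u = (∫ u in p..q, f u) + ∫ u in q..r, f u :=
  (integral_add_adjacent_intervals (hf.intervalIntegrable _ _)
    (hf.intervalIntegrable _ _)).symm

/-- The integral of a trapezoidal bump with unit slopes, height `m` and plateau `[p, q]`. -/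
lemma integral_trapezoid {m p q : ℝ} (hm : 0 ≤ m) (hp : m ≤ p) (hpq : p ≤ q) (hq : q + m ≤ 1) :
    ∫ u in (0:ℝ)..1, max 0 (m - max (p - u) 0 - max (u - q) 0) = m * (q - p) + m ^ 2 := by
  have hf : Continuous fun u : ℝ => max 0 (m - max (p - u) 0 - max (u - q) 0) := by fun_prop
  rw [integral_split hf 0 (p - m) 1, integral_split hf (p - m) p 1, integral_split hf p q 1,
    integral_split hf q (q + m) 1,
    integral_of_eqOn_affine 0 0 (by linarith) (by intros; grind),
    integral_of_eqOn_affine 1 (m - p) (by linarith) (by intros; grind),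
    integral_of_eqOn_affine 0 m hpq (by intros; grind),
    integral_of_eqOn_affine (-1) (m + q) (by linarith) (by intros; grind),
    integral_of_eqOn_affine 0 0 hq (by intros; grind)]
  ring

lemma continuous_lowerC_diag (a b m : ℝ) : Continuous fun u => lowerC a b m u u := by
  unfold lowerC; fun_prop

lemma continuous_lowerC_antidiag (a b m : ℝ) : Continuous fun u => lowerC a b m u (1 - u) := by
  unfold lowerC; fun_prop

lemma continuous_upperC_diag (a b m : ℝ) : Continuous fun u => upperC a b m u u := by
  unfold upperC; fun_prop

lemma continuous_upperC_antidiag (a b m : ℝ) : Continuous fun u => upperC a b m u (1 - u) := by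
  unfold upperC; fun_prop

lemma giniGamma_lowerC_eq (a b m : ℝ) : giniGamma (lowerC a b m) =
    4 * ((∫ u in (0:ℝ)..1, lowerC a b m u u) + ∫ u in (0:ℝ)..1, lowerC a b m u (1 - u)) - 2 := by
  rw [giniGamma, intervalIntegral.integral_add
    ((continuous_lowerC_diag a b m).intervalIntegrable _ _)
    ((continuous_lowerC_antidiag a b m).intervalIntegrable _ _)]

lemma giniGamma_upperC_eq (a b m : ℝ) : giniGamma (upperC a b m) =
    4 * ((∫ u in (0:ℝ)..1, upperC a b m u u) + ∫ u in (0:ℝ)..1, upperC a b m u (1 - u)) - 2 := by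
  rw [giniGamma, intervalIntegral.integral_add
    ((continuous_upperC_diag a b m).intervalIntegrable _ _)
    ((continuous_upperC_antidiag a b m).intervalIntegrable _ _)]

section Triangle

variable {a b m : ℝ}

lemma lowerC_diag_eq (hm : 0 ≤ m) (hba : m ≤ b - a) (hab : a + b ≤ 1) (u : ℝ) :
    lowerC a b m u u = max (max (2 * u - 1) 0) (min m (u - b + m)) := by
  unfold lowerC
  rw [max_eq_right (by linarith : a + b - 1 ≤ 0)]
  grind

lemma lowerC_antidiag_eq (hab : a + b ≤ 1) (u : ℝ) :
    lowerC a b m u (1 - u) = max 0 (m - max (a - u) 0 - max (u - (1 - b)) 0) := by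
  unfold lowerC
  rw [max_eq_right (by linarith : a + b - 1 ≤ 0)]
  grind

lemma upperC_diag_eq (hm : 0 ≤ m) (hba : m ≤ b - a) (u : ℝ) :
    upperC a b m u u = u - max 0 (m - max (a - u) 0 - max (u - b) 0) := by
  unfold upperC
  rw [min_eq_left (by linarith : a ≤ b)]
  grind

lemma upperC_antidiag_eq (hm : 0 ≤ m) (hba : m ≤ b - a) (hab : a + b ≤ 1) (u : ℝ) :
    upperC a b m u (1 - u) =
      min (min u (1 - u)) (max (max (1 - u - m) (u - (b - a) - m)) (1 - b - m)) := by
  unfold upperC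
  rw [min_eq_left (by linarith : a ≤ b)]
  grind

lemma integral_lowerC_antidiag (hm : 0 ≤ m) (ha : m ≤ a) (hba : m ≤ b - a) (hab : a + b ≤ 1) :
    ∫ u in (0:ℝ)..1, lowerC a b m u (1 - u) = m * (1 - b - a) + m ^ 2 := by
  simp_rw [lowerC_antidiag_eq hab]
  exact integral_trapezoid hm ha (by linarith) (by linarith)

lemma integral_upperC_diag (hm : 0 ≤ m) (ha : m ≤ a) (hba : m ≤ b - a) (hab : a + b ≤ 1) :
    ∫ u in (0:ℝ)..1, upperC a b m u u = 1 / 2 - (m * (b - a) + m ^ 2) := by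
  simp_rw [upperC_diag_eq hm hba]
  rw [intervalIntegral.integral_sub (Continuous.intervalIntegrable (by fun_prop) _ _)
    (Continuous.intervalIntegrable (by fun_prop) _ _),
    integral_trapezoid hm ha (by linarith) (by linarith), integral_id]
  ring

/-- Over the triangle, Gini's gamma of the lower bound is smallest at `(m, 1 - m)`. -/
lemma giniGamma_lowerC_ge (hm : 0 ≤ m) (hm3 : m ≤ 1 / 3) (ha : m ≤ a) (hba : m ≤ b - a)
    (hab : a + b ≤ 1) : giniGamma (lowerC m (1 - m) m) ≤ giniGamma (lowerC a b m) := by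
  have hdiag : ∫ u in (0:ℝ)..1, lowerC m (1 - m) m u u ≤ ∫ u in (0:ℝ)..1, lowerC a b m u u := by
    refine intervalIntegral.integral_mono zero_le_one
      ((continuous_lowerC_diag _ _ _).intervalIntegrable _ _)
      ((continuous_lowerC_diag _ _ _).intervalIntegrable _ _) fun u => ?_
    dsimp only
    rw [lowerC_diag_eq hm (by linarith) (by linarith), lowerC_diag_eq hm hba hab]
    exact max_le_max le_rfl (min_le_min le_rfl (by linarith))
  rw [giniGamma_lowerC_eq, giniGamma_lowerC_eq, integral_lowerC_antidiag hm ha hba hab,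
    integral_lowerC_antidiag hm le_rfl (by linarith) (by linarith)]
  nlinarith [mul_nonneg hm (by linarith : 0 ≤ 1 - b - a)]

/-- Over the triangle, Gini's gamma of the upper bound is largest at `(m, 2 * m)`. -/
lemma giniGamma_upperC_le (hm : 0 ≤ m) (hm3 : m ≤ 1 / 3) (ha : m ≤ a) (hba : m ≤ b - a)
    (hab : a + b ≤ 1) : giniGamma (upperC a b m) ≤ giniGamma (upperC m (2 * m) m) := by
  have hanti : ∫ u in (0:ℝ)..1, upperC a b m u (1 - u) ≤
      ∫ u in (0:ℝ)..1, upperC m (2 * m) m u (1 - u) := by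
    refine intervalIntegral.integral_mono zero_le_one
      ((continuous_upperC_antidiag _ _ _).intervalIntegrable _ _)
      ((continuous_upperC_antidiag _ _ _).intervalIntegrable _ _) fun u => ?_
    dsimp only
    rw [upperC_antidiag_eq hm hba hab, upperC_antidiag_eq hm (by linarith) (by linarith)]
    exact min_le_min le_rfl (max_le_max (max_le_max le_rfl (by linarith)) (by linarith))
  rw [giniGamma_upperC_eq, giniGamma_upperC_eq, integral_upperC_diag hm ha hba hab,
    integral_upperC_diag hm le_rfl (by linarith) (by linarith)]
  nlinarith [mul_le_mul_of_nonneg_left hba hm]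

lemma giniGamma_lowerC_of_le_quarter (hm : 0 ≤ m) (h : m ≤ 1 / 4) :
    giniGamma (lowerC m (1 - m) m) = 4 * m ^ 2 - 1 := by
  have hf := continuous_lowerC_diag m (1 - m) m
  have heq := lowerC_diag_eq (a := m) (b := 1 - m) hm (by linarith) (by linarith)
  rw [giniGamma_lowerC_eq, integral_lowerC_antidiag hm le_rfl (by linarith) (by linarith),
    integral_split hf 0 (1 / 2) 1,
    integral_of_eqOn_affine 0 0 (by norm_num) (by intros; rw [heq]; grind),
    integral_of_eqOn_affine 2 (-1) (by norm_num) (by intros; rw [heq]; grind)]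
  ring

lemma giniGamma_lowerC_of_quarter_le (h : 1 / 4 ≤ m) (hm3 : m ≤ 1 / 3) :
    giniGamma (lowerC m (1 - m) m) = 20 * m ^ 2 - 8 * m := by
  have hm : 0 ≤ m := by linarith
  have hf := continuous_lowerC_diag m (1 - m) m
  have heq := lowerC_diag_eq (a := m) (b := 1 - m) hm (by linarith) (by linarith)
  rw [giniGamma_lowerC_eq, integral_lowerC_antidiag hm le_rfl (by linarith) (by linarith),
    integral_split hf 0 (1 - 2 * m) 1, integral_split hf (1 - 2 * m) (2 * m) 1,
    integral_of_eqOn_affine 0 0 (by linarith) (by intros; rw [heq]; grind),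
    integral_of_eqOn_affine 1 (2 * m - 1) (by linarith) (by intros; rw [heq]; grind),
    integral_of_eqOn_affine 2 (-1) (by linarith) (by intros; rw [heq]; grind)]
  ring

lemma giniGamma_upperC_of_le_sixth (hm : 0 ≤ m) (h : m ≤ 1 / 6) :
    giniGamma (upperC m (2 * m) m) = 1 - 8 * m ^ 2 := by
  have hf := continuous_upperC_antidiag m (2 * m) m
  have heq := upperC_antidiag_eq (a := m) (b := 2 * m) hm (by linarith) (by linarith)
  rw [giniGamma_upperC_eq, integral_upperC_diag hm le_rfl (by linarith) (by linarith),
    integral_split hf 0 (1 / 2) 1,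
    integral_of_eqOn_affine 1 0 (by norm_num) (by intros; rw [heq]; grind),
    integral_of_eqOn_affine (-1) 1 (by norm_num) (by intros; rw [heq]; grind)]
  ring

lemma giniGamma_upperC_of_sixth_le (h : 1 / 6 ≤ m) (h' : m ≤ 1 / 5) :
    giniGamma (upperC m (2 * m) m) = 12 * m - 44 * m ^ 2 := by
  have hm : 0 ≤ m := by linarith
  have hf := continuous_upperC_antidiag m (2 * m) m
  have heq := upperC_antidiag_eq (a := m) (b := 2 * m) hm (by linarith) (by linarith)
  rw [giniGamma_upperC_eq, integral_upperC_diag hm le_rfl (by linarith) (by linarith),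
    integral_split hf 0 (1 - 3 * m) 1, integral_split hf (1 - 3 * m) (3 * m) 1,
    integral_of_eqOn_affine 1 0 (by linarith) (by intros; rw [heq]; grind),
    integral_of_eqOn_affine 0 (1 - 3 * m) (by linarith) (by intros; rw [heq]; grind),
    integral_of_eqOn_affine (-1) 1 (by linarith) (by intros; rw [heq]; grind)]
  ring

lemma giniGamma_upperC_of_fifth_le (h : 1 / 5 ≤ m) (h' : m ≤ 1 / 4) :
    giniGamma (upperC m (2 * m) m) = 1 + 2 * m - 19 * m ^ 2 := by
  have hm : 0 ≤ m := by linarith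
  have hf := continuous_upperC_antidiag m (2 * m) m
  have heq := upperC_antidiag_eq (a := m) (b := 2 * m) hm (by linarith) (by linarith)
  rw [giniGamma_upperC_eq, integral_upperC_diag hm le_rfl (by linarith) (by linarith),
    integral_split hf 0 ((1 - m) / 2) 1, integral_split hf ((1 - m) / 2) (2 * m) 1,
    integral_split hf (2 * m) (3 * m) 1,
    integral_of_eqOn_affine 1 0 (by linarith) (by intros; rw [heq]; grind),
    integral_of_eqOn_affine (-1) (1 - m) (by linarith) (by intros; rw [heq]; grind),
    integral_of_eqOn_affine 0 (1 - 3 * m) (by linarith) (by intros; rw [heq]; grind),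
    integral_of_eqOn_affine (-1) 1 (by linarith) (by intros; rw [heq]; grind)]
  ring

lemma giniGamma_upperC_of_quarter_le (h : 1 / 4 ≤ m) (h' : m ≤ 1 / 3) :
    giniGamma (upperC m (2 * m) m) = 2 - 6 * m - 3 * m ^ 2 := by
  have hm : 0 ≤ m := by linarith
  have hf := continuous_upperC_antidiag m (2 * m) m
  have heq := upperC_antidiag_eq (a := m) (b := 2 * m) hm (by linarith) (by linarith)
  rw [giniGamma_upperC_eq, integral_upperC_diag hm le_rfl (by linarith) (by linarith),
    integral_split hf 0 ((1 - m) / 2) 1, integral_split hf ((1 - m) / 2) (2 * m) 1,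
    integral_split hf (2 * m) (1 - m) 1, integral_split hf (1 - m) ((1 + 2 * m) / 2) 1,
    integral_of_eqOn_affine 1 0 (by linarith) (by intros; rw [heq]; grind),
    integral_of_eqOn_affine (-1) (1 - m) (by linarith) (by intros; rw [heq]; grind),
    integral_of_eqOn_affine 0 (1 - 3 * m) (by linarith) (by intros; rw [heq]; grind),
    integral_of_eqOn_affine 1 (-2 * m) (by linarith) (by intros; rw [heq]; grind),
    integral_of_eqOn_affine (-1) 1 (by linarith) (by intros; rw [heq]; grind)]
  ring

end Triangle

theorem gamma_bounds_on_triangle (m : ℝ) (hm : m ∈ Set.Icc (0:ℝ) (1/3)) :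
    (∀ a b : ℝ, a ∈ Set.Icc (0:ℝ) 1 → b ∈ Set.Icc (0:ℝ) 1 →
      m ≤ a → m ≤ b - a → a + b ≤ 1 →
      ((m ≤ 1/4 → 4 * m^2 - 1 ≤ giniGamma (lowerC a b m)) ∧
       (1/4 ≤ m → 20 * m^2 - 8 * m ≤ giniGamma (lowerC a b m)) ∧
       (m ≤ 1/6 → giniGamma (upperC a b m) ≤ 1 - 8 * m^2) ∧
       (1/6 ≤ m → m ≤ 1/5 → giniGamma (upperC a b m) ≤ 12 * m - 44 * m^2) ∧
       (1/5 ≤ m → m ≤ 1/4 → giniGamma (upperC a b m) ≤ 1 + 2 * m - 19 * m^2) ∧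
       (1/4 ≤ m → giniGamma (upperC a b m) ≤ 2 - 6 * m - 3 * m^2))) ∧
    (m ≤ 1/4 → giniGamma (lowerC m (1 - m) m) = 4 * m^2 - 1) ∧
    (1/4 ≤ m → giniGamma (lowerC m (1 - m) m) = 20 * m^2 - 8 * m) ∧
    (m ≤ 1/6 → giniGamma (upperC m (2 * m) m) = 1 - 8 * m^2) ∧
    (1/6 ≤ m → m ≤ 1/5 → giniGamma (upperC m (2 * m) m) = 12 * m - 44 * m^2) ∧
    (1/5 ≤ m → m ≤ 1/4 → giniGamma (upperC m (2 * m) m) = 1 + 2 * m - 19 * m^2) ∧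
    (1/4 ≤ m → giniGamma (upperC m (2 * m) m) = 2 - 6 * m - 3 * m^2) := by
  obtain ⟨hm0, hm3⟩ := hm
  refine ⟨fun a b _ _ ha hba hab => ?_, giniGamma_lowerC_of_le_quarter hm0,
    fun h => giniGamma_lowerC_of_quarter_le h hm3, giniGamma_upperC_of_le_sixth hm0,
    giniGamma_upperC_of_sixth_le, giniGamma_upperC_of_fifth_le,
    fun h => giniGamma_upperC_of_quarter_le h hm3⟩
  have hlow := giniGamma_lowerC_ge hm0 hm3 ha hba hab
  have hup := giniGamma_upperC_le hm0 hm3 ha hba hab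
  exact ⟨fun h => (giniGamma_lowerC_of_le_quarter hm0 h).symm.trans_le hlow,
    fun h => (giniGamma_lowerC_of_quarter_le h hm3).symm.trans_le hlow,
    fun h => hup.trans_eq (giniGamma_upperC_of_le_sixth hm0 h),
    fun h h' => hup.trans_eq (giniGamma_upperC_of_sixth_le h h'),
    fun h h' => hup.trans_eq (giniGamma_upperC_of_fifth_le h h'),
    fun h => hup.trans_eq (giniGamma_upperC_of_quarter_le h hm3)⟩
end

section
/- Let C be a copula with attained asymmetry m. Then g(m) ≤ β(C) ≤ h(m), where β(C) = 4·C(1/2,1/2) − 1 is Blomqvist's beta of C, g(m) = −1 if 0 ≤ m ≤ 1/4 and g(m) = 8m − 3 if 1/4 ≤ m ≤ 1/3, and h(m) = 1 if 0 ≤ m ≤ 1/6, h(m) = 3 − 12m if 1/6 ≤ m ≤ 1/4, and h(m) = 1 − 4m if 1/4 ≤ m ≤ 1/3. In particular, if m = 1/3 then β(C) = −1/3. -/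
open Set MeasureTheory intervalIntegral

namespace IsCopula

variable {C : ℝ → ℝ → ℝ}

theorem swap (hC : IsCopula C) : IsCopula (fun u v => C v u) := by
  refine ⟨fun u hu => ?_, fun u₁ u₂ v₁ v₂ h₁ h₂ h₃ h₄ h₅ h₆ => ?_⟩
  · obtain ⟨h₁, h₂, h₃, h₄⟩ := hC.1 u hu
    exact ⟨h₂, h₁, h₄, h₃⟩
  · have := hC.2 v₁ v₂ u₁ u₂ h₄ h₅ h₆ h₁ h₂ h₃
    dsimp only
    linarith

theorem mono_left (hC : IsCopula C) {u₁ u₂ v : ℝ} (h₁ : 0 ≤ u₁) (h : u₁ ≤ u₂) (h₂ : u₂ ≤ 1)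
    (hv : 0 ≤ v) (hv' : v ≤ 1) : C u₁ v ≤ C u₂ v := by
  have := hC.2 u₁ u₂ 0 v h₁ h h₂ le_rfl hv hv'
  have e₁ := (hC.1 u₁ ⟨h₁, h.trans h₂⟩).1
  have e₂ := (hC.1 u₂ ⟨h₁.trans h, h₂⟩).1
  linarith

theorem sub_le_left (hC : IsCopula C) {u₁ u₂ v : ℝ} (h₁ : 0 ≤ u₁) (h : u₁ ≤ u₂) (h₂ : u₂ ≤ 1)
    (hv : 0 ≤ v) (hv' : v ≤ 1) : C u₂ v - C u₁ v ≤ u₂ - u₁ := by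
  have := hC.2 u₁ u₂ v 1 h₁ h h₂ hv hv' le_rfl
  have e₁ := (hC.1 u₁ ⟨h₁, h.trans h₂⟩).2.2.1
  have e₂ := (hC.1 u₂ ⟨h₁.trans h, h₂⟩).2.2.1
  linarith

theorem mono_right (hC : IsCopula C) {u v₁ v₂ : ℝ} (h₁ : 0 ≤ v₁) (h : v₁ ≤ v₂) (h₂ : v₂ ≤ 1)
    (hu : 0 ≤ u) (hu' : u ≤ 1) : C u v₁ ≤ C u v₂ :=
  hC.swap.mono_left h₁ h h₂ hu hu'

theorem sub_le_right (hC : IsCopula C) {u v₁ v₂ : ℝ} (h₁ : 0 ≤ v₁) (h : v₁ ≤ v₂) (h₂ : v₂ ≤ 1)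
    (hu : 0 ≤ u) (hu' : u ≤ 1) : C u v₂ - C u v₁ ≤ v₂ - v₁ :=
  hC.swap.sub_le_left h₁ h h₂ hu hu'

theorem nonneg (hC : IsCopula C) {u v : ℝ} (hu : 0 ≤ u) (hu' : u ≤ 1) (hv : 0 ≤ v)
    (hv' : v ≤ 1) : 0 ≤ C u v := by
  have := hC.mono_left le_rfl hu hu' hv hv'
  have := (hC.1 v ⟨hv, hv'⟩).2.1
  linarith

theorem le_left (hC : IsCopula C) {u v : ℝ} (hu : 0 ≤ u) (hu' : u ≤ 1) (hv : 0 ≤ v)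
    (hv' : v ≤ 1) : C u v ≤ u := by
  have := hC.mono_right hv hv' le_rfl hu hu'
  have := (hC.1 u ⟨hu, hu'⟩).2.2.1
  linarith

theorem add_sub_one_le (hC : IsCopula C) {u v : ℝ} (hu : 0 ≤ u) (hu' : u ≤ 1) (hv : 0 ≤ v)
    (hv' : v ≤ 1) : u + v - 1 ≤ C u v := by
  have := hC.sub_le_right hv hv' le_rfl hu hu'
  have := (hC.1 u ⟨hu, hu'⟩).2.2.1
  linarith

/-- Bounds on the value at the centre when the asymmetry `m` is the excess of `C a b` over
`C b a` at a point above the diagonal. -/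
theorem center_bounds_of_le (hC : IsCopula C) {a b m : ℝ} (ha : 0 ≤ a) (hab : a ≤ b) (hb : b ≤ 1)
    (h : C a b - C b a = m) :
    2 * m - 1 / 2 ≤ C (1 / 2) (1 / 2) ∧
      (m ≤ 1 / 4 → C (1 / 2) (1 / 2) ≤ 1 - 3 * m) ∧
      (1 / 4 ≤ m → C (1 / 2) (1 / 2) ≤ 1 / 2 - m) := by
  have ha' : a ≤ 1 := hab.trans hb
  have hb' : 0 ≤ b := ha.trans hab
  have hy : 0 ≤ C b a := hC.nonneg hb' hb ha ha'
  have hy' : b + a - 1 ≤ C b a := hC.add_sub_one_le hb' hb ha ha'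
  have hx : C a b ≤ a := hC.le_left ha ha' hb' hb
  have hd : C a b - C a a ≤ b - a := hC.sub_le_right ha hab hb ha ha'
  have hd' : C a a ≤ C b a := hC.mono_left ha hab hb ha ha'
  rcases le_total b (1 / 2) with hb2 | hb2
  · have l₁ : C a b ≤ C (1 / 2) b := hC.mono_left ha (by linarith) (by norm_num) hb' hb
    have l₂ : C (1 / 2) b ≤ C (1 / 2) (1 / 2) :=
      hC.mono_right hb' hb2 (by norm_num) (by norm_num) (by norm_num)
    have r₁ : C (1 / 2) a - C b a ≤ 1 / 2 - b := hC.sub_le_left hb' hb2 (by norm_num) ha ha'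
    have r₂ : C (1 / 2) (1 / 2) - C (1 / 2) a ≤ 1 / 2 - a :=
      hC.sub_le_right ha (by linarith) (by norm_num) (by norm_num) (by norm_num)
    refine ⟨?_, fun _ => ?_, fun _ => ?_⟩ <;> linarith
  rcases le_total a (1 / 2) with ha2 | ha2
  · have l₁ : C a b - C a (1 / 2) ≤ b - 1 / 2 :=
      hC.sub_le_right (by norm_num) hb2 hb ha ha'
    have l₂ : C a (1 / 2) ≤ C (1 / 2) (1 / 2) :=
      hC.mono_left ha ha2 (by norm_num) (by norm_num) (by norm_num)
    have r₁ : C (1 / 2) (1 / 2) ≤ C b (1 / 2) :=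
      hC.mono_left (by norm_num) hb2 hb (by norm_num) (by norm_num)
    have r₂ : C b (1 / 2) - C b a ≤ 1 / 2 - a :=
      hC.sub_le_right ha ha2 (by norm_num) hb' hb
    refine ⟨?_, fun _ => ?_, fun _ => ?_⟩ <;> linarith
  · have l₁ : C a b - C (1 / 2) b ≤ a - 1 / 2 :=
      hC.sub_le_left (by norm_num) ha2 ha' hb' hb
    have l₂ : C (1 / 2) b - C (1 / 2) (1 / 2) ≤ b - 1 / 2 :=
      hC.sub_le_right (by norm_num) hb2 hb (by norm_num) (by norm_num)
    have r₁ : C (1 / 2) (1 / 2) ≤ C b (1 / 2) :=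
      hC.mono_left (by norm_num) hb2 hb (by norm_num) (by norm_num)
    have r₂ : C b (1 / 2) ≤ C b a := hC.mono_right (by norm_num) ha2 ha' hb' hb
    refine ⟨?_, fun _ => ?_, fun _ => ?_⟩ <;> linarith

theorem center_bounds (hC : IsCopula C) {a b m : ℝ} (ha : a ∈ Set.Icc (0 : ℝ) 1)
    (hb : b ∈ Set.Icc (0 : ℝ) 1) (h : |C a b - C b a| = m) :
    2 * m - 1 / 2 ≤ C (1 / 2) (1 / 2) ∧
      (m ≤ 1 / 4 → C (1 / 2) (1 / 2) ≤ 1 - 3 * m) ∧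
      (1 / 4 ≤ m → C (1 / 2) (1 / 2) ≤ 1 / 2 - m) := by
  wlog hab : a ≤ b generalizing a b
  · exact this hb ha (by rwa [abs_sub_comm]) (le_of_not_ge hab)
  rcases abs_choice (C a b - C b a) with e | e
  · exact hC.center_bounds_of_le ha.1 hab hb.2 (e.symm.trans h)
  · exact hC.swap.center_bounds_of_le ha.1 hab hb.2 (by linarith)

end IsCopula

theorem beta_vs_asymmetry (C : ℝ → ℝ → ℝ) (m : ℝ) (hC : IsCopula C)
    (hbound : ∀ u ∈ Set.Icc (0:ℝ) 1, ∀ v ∈ Set.Icc (0:ℝ) 1, |C u v - C v u| ≤ m)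
    (hattain : ∃ a ∈ Set.Icc (0:ℝ) 1, ∃ b ∈ Set.Icc (0:ℝ) 1, |C a b - C b a| = m) :
    ((0 ≤ m → m ≤ 1/4 → -1 ≤ blomqvistBeta C) ∧
     (1/4 ≤ m → m ≤ 1/3 → 8 * m - 3 ≤ blomqvistBeta C)) ∧
    ((0 ≤ m → m ≤ 1/6 → blomqvistBeta C ≤ 1) ∧
     (1/6 ≤ m → m ≤ 1/4 → blomqvistBeta C ≤ 3 - 12 * m) ∧
     (1/4 ≤ m → m ≤ 1/3 → blomqvistBeta C ≤ 1 - 4 * m)) ∧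
    (m = 1/3 → blomqvistBeta C = -(1/3)) := by
  obtain ⟨a, ha, b, hb, hm⟩ := hattain
  obtain ⟨hlow, hup, hup'⟩ := hC.center_bounds ha hb hm
  have h0 : 0 ≤ C (1 / 2) (1 / 2) :=
    hC.nonneg (by norm_num) (by norm_num) (by norm_num) (by norm_num)
  have h1 : C (1 / 2) (1 / 2) ≤ 1 / 2 :=
    hC.le_left (by norm_num) (by norm_num) (by norm_num) (by norm_num)
  unfold blomqvistBeta
  refine ⟨⟨fun _ _ => ?_, fun _ _ => ?_⟩, ⟨fun _ _ => ?_, fun _ h => ?_, fun h _ => ?_⟩,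
    fun h => ?_⟩
  · linarith
  · linarith
  · linarith
  · linarith [hup h]
  · linarith [hup' h]
  · linarith [hup' (by linarith)]
end
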